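/- arXiv:1506.07699 — 2 statements merged into one kernel-verified Lean document; each statement's English description precedes it below -/
import Mathlib

section
/- Let A, B, C be real symmetric r×r matrices such that f = det(I_r + Ax + By + Cz) is a cubic polynomial. Then there exist real symmetric 5×5 matrices A', B', C' such that f = det(I₅ + A'x + B'y + C'z). -/
open MvPolynomial

theorem aux_rank {r : ℕ} (S : Matrix (Fin r) (Fin r) ℝ) (hS : S.IsSymm)
    (p : Polynomial ℝ) (hp : ∀ t : ℝ, p.eval t = (1 + t • S).det) :
    S.rank ≤ p.natDegree := by
  have hH : S.IsHermitian := by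
    rw [Matrix.IsHermitian, Matrix.conjTranspose_eq_transpose_of_trivial]; exact hS
  have hUU : (hH.eigenvectorUnitary : Matrix (Fin r) (Fin r) ℝ) *
      star (hH.eigenvectorUnitary : Matrix (Fin r) (Fin r) ℝ) = 1 :=
    Unitary.coe_mul_star_self hH.eigenvectorUnitary
  have hdet : ∀ t : ℝ, (1 + t • S).det = ∏ i, (1 + t * hH.eigenvalues i) := by
    intro t
    have h1 : 1 + t • S = (hH.eigenvectorUnitary : Matrix (Fin r) (Fin r) ℝ) *
        Matrix.diagonal (fun i => 1 + t * hH.eigenvalues i) *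
        star (hH.eigenvectorUnitary : Matrix (Fin r) (Fin r) ℝ) := by
      have h2 : Matrix.diagonal (fun i => 1 + t * hH.eigenvalues i)
        = 1 + t • Matrix.diagonal (RCLike.ofReal ∘ hH.eigenvalues : Fin r → ℝ) := by
        ext i j
        by_cases h : i = j
        · subst h; simp
        · simp [h]
      have h3 := hH.spectral_theorem
      rw [Unitary.conjStarAlgAut_apply] at h3
      rw [h2, mul_add, add_mul, mul_one, hUU, Matrix.mul_smul,
        Matrix.smul_mul, ← h3]
    have hu : (hH.eigenvectorUnitary : Matrix (Fin r) (Fin r) ℝ).det *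
      (star (hH.eigenvectorUnitary : Matrix (Fin r) (Fin r) ℝ)).det = 1 := by
      rw [← Matrix.det_mul, hUU, Matrix.det_one]
    rw [h1, Matrix.det_mul, Matrix.det_mul, mul_right_comm, hu, one_mul, Matrix.det_diagonal]
  have hpp : p = ∏ i, (1 + Polynomial.X * Polynomial.C (hH.eigenvalues i)) := by
    apply Polynomial.funext
    intro t
    rw [hp, hdet, Polynomial.eval_prod]
    simp only [Polynomial.eval_add, Polynomial.eval_mul, Polynomial.eval_one, Polynomial.eval_X,
      Polynomial.eval_C]
  have hdeg : ∀ i, (1 + Polynomial.X * Polynomial.C (hH.eigenvalues i) : Polynomial ℝ).natDegree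
      = if hH.eigenvalues i ≠ 0 then 1 else 0 := by
    intro i
    split_ifs with h
    · have : (1 + Polynomial.X * Polynomial.C (hH.eigenvalues i) : Polynomial ℝ)
        = Polynomial.C (hH.eigenvalues i) * Polynomial.X + Polynomial.C 1 := by
        simp; ring
      rw [this, Polynomial.natDegree_linear h]
    · push Not at h
      simp [h]
  have hne : ∀ i, (1 + Polynomial.X * Polynomial.C (hH.eigenvalues i) : Polynomial ℝ) ≠ 0 := by
    intro i h
    have := congrArg (Polynomial.eval 0) h
    simp at this
  rw [hpp, Polynomial.natDegree_prod _ _ (fun i _ => hne i), hH.rank_eq_card_non_zero_eigs,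
    Fintype.card_subtype]
  simp only [hdeg, Finset.sum_boole]
  simp

theorem aux_zero {g : ℝ → ℝ} (hg : Continuous g) (h : ∀ t ≠ 0, g t = 0) : g 0 = 0 := by
  have := Continuous.ext_on (dense_compl_singleton (0 : ℝ)) hg continuous_const
    (fun t ht => h t ht)
  exact congrFun this 0

theorem aux_block {ι : Type*} [Fintype ι] [DecidableEq ι] (D P : Matrix ι ι ℝ)
    (b : Matrix ι Unit ℝ) (c : Matrix Unit ι ℝ) (s : Matrix Unit Unit ℝ) (hD : D.det ≠ 0)
    (h : ∀ t : ℝ, (Matrix.fromBlocks (D + t • P) (t • b) (t • c) (t • s)).det = 0) :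
    s = 0 ∧ c * D⁻¹ * b = 0 := by
  have hDu : IsUnit D.det := isUnit_iff_ne_zero.mpr hD
  let _ := Matrix.invertibleOfIsUnitDet D hDu
  have h1 : ∀ t : ℝ, t ≠ 0 → (Matrix.fromBlocks (D + t • P) b (t • c) s).det = 0 := by
    intro t ht
    have e : Matrix.fromBlocks (D + t • P) (t • b) (t • c) (t • s)
      = Matrix.fromBlocks (D + t • P) b (t • c) s *
        Matrix.fromBlocks (1 : Matrix ι ι ℝ) 0 0 (t • (1 : Matrix Unit Unit ℝ)) := by
      simp [Matrix.fromBlocks_multiply]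
    have := h t
    rw [e, Matrix.det_mul, Matrix.det_fromBlocks_zero₂₁] at this
    simpa [ht] using this
  have h2 := aux_zero (g := fun t => (Matrix.fromBlocks (D + t • P) b (t • c) s).det)
    (by fun_prop) h1
  have hs : s = 0 := by
    simp only [zero_smul, add_zero] at h2
    rw [Matrix.det_fromBlocks_zero₂₁] at h2
    have := (mul_eq_zero.mp h2).resolve_left hD
    ext i j
    simpa using this
  refine ⟨hs, ?_⟩
  subst hs
  have h3 : ∀ t : ℝ, t ≠ 0 → (Matrix.fromBlocks (D + t • P) b c 0).det = 0 := by
    intro t ht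
    have e : Matrix.fromBlocks (D + t • P) b (t • c) 0
      = Matrix.fromBlocks (1 : Matrix ι ι ℝ) 0 0 (t • (1 : Matrix Unit Unit ℝ)) *
        Matrix.fromBlocks (D + t • P) b c 0 := by
      simp [Matrix.fromBlocks_multiply]
    have := h1 t ht
    rw [e, Matrix.det_mul, Matrix.det_fromBlocks_zero₂₁] at this
    simpa [ht] using this
  have h4 := aux_zero (g := fun t => (Matrix.fromBlocks (D + t • P) b c 0).det)
    (by fun_prop) h3
  simp only [zero_smul, add_zero] at h4
  rw [Matrix.det_fromBlocks₁₁, Matrix.invOf_eq_nonsing_inv] at h4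
  have := (mul_eq_zero.mp h4).resolve_left hD
  ext i j
  simpa using this

theorem aux_key {r : ℕ} (M N : Matrix (Fin r) (Fin r) ℝ) (hM : M.IsSymm) (hN : N.IsSymm)
    (h : ∀ t : ℝ, (M + t • N).rank ≤ M.rank) :
    2 * Module.finrank ℝ M.mulVecLin.ker ≤
      2 * Module.finrank ℝ ↥(M.mulVecLin.ker ⊓ N.mulVecLin.ker) + M.rank := by
  have hH : M.IsHermitian := by
    rw [Matrix.IsHermitian, Matrix.conjTranspose_eq_transpose_of_trivial]; exact hM
  let ι := {i // hH.eigenvalues i ≠ 0}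
  have hcard : M.rank = Fintype.card ι := hH.rank_eq_card_non_zero_eigs
  let P : Matrix (Fin r) ι ℝ := Matrix.of fun a i => (hH.eigenvectorBasis i.1).ofLp a
  let D : Matrix ι ι ℝ := Matrix.diagonal fun i => hH.eigenvalues i.1
  have hD : D.det ≠ 0 := by
    rw [Matrix.det_diagonal]
    exact Finset.prod_ne_zero_iff.mpr fun i _ => i.2
  have hMP : M * P = P * D := by
    ext a i
    have := congrFun (hH.mulVec_eigenvectorBasis i.1) a
    rw [Matrix.mul_diagonal]
    simp only [Pi.smul_apply, smul_eq_mul] at this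
    rw [mul_comm]
    exact this
  have hPP : P.transpose * P = 1 := by
    ext i j
    have := orthonormal_iff_ite.mp hH.eigenvectorBasis.orthonormal j.1 i.1
    rw [EuclideanSpace.inner_eq_star_dotProduct] at this
    rw [Matrix.one_apply]
    simp only [star_trivial] at this
    refine Eq.trans this ?_
    by_cases hij : i = j
    · simp [hij]
    · have : j.1 ≠ i.1 := fun h' => hij (Subtype.ext h'.symm)
      simp [hij, this]
  have hk : ∀ k k' : Fin r → ℝ, M.mulVec k = 0 → M.mulVec k' = 0 →
      k ⬝ᵥ N.mulVec k' = 0 ∧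
      (P.transpose.mulVec (N.mulVec k)) ⬝ᵥ (D⁻¹.mulVec (P.transpose.mulVec (N.mulVec k'))) = 0 := by
    intro k k' hk hk'
    let c : Matrix (Fin r) Unit ℝ := Matrix.replicateCol Unit k
    let c' : Matrix (Fin r) Unit ℝ := Matrix.replicateCol Unit k'
    have hMc' : M * c' = 0 := by
      ext a u; exact congrFun hk' a
    have hMc : M * c = 0 := by
      ext a u; exact congrFun hk a
    have hcM : c.transpose * M = 0 := by
      have := congrArg Matrix.transpose hMc
      rwa [Matrix.transpose_mul, hM.eq, Matrix.transpose_zero] at this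
    have hb := aux_block D (P.transpose * N * P) (P.transpose * N * c') (c.transpose * N * P)
      (c.transpose * N * c') hD (by
        intro t
        have e : Matrix.fromBlocks (D + t • (P.transpose * N * P)) (t • (P.transpose * N * c'))
          (t • (c.transpose * N * P)) (t • (c.transpose * N * c'))
          = Matrix.fromRows P.transpose c.transpose * (M + t • N) * Matrix.fromCols P c' := by
          rw [Matrix.fromRows_mul, Matrix.fromRows_mul_fromCols]
          congr 1
          · rw [Matrix.mul_add, Matrix.add_mul, Matrix.mul_assoc _ M, hMP, ← Matrix.mul_assoc, hPP]
            simp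
          · rw [Matrix.mul_add, Matrix.add_mul, Matrix.mul_assoc _ M, hMc']
            simp
          · rw [Matrix.mul_add, Matrix.add_mul, hcM]
            simp
          · rw [Matrix.mul_add, Matrix.add_mul, hcM]
            simp
        by_contra hne
        have hr := Matrix.rank_of_isUnit _
          ((Matrix.isUnit_iff_isUnit_det _).mpr (isUnit_iff_ne_zero.mpr hne))
        rw [e] at hr
        have h1 := (Matrix.rank_mul_le_left (Matrix.fromRows P.transpose c.transpose * (M + t • N))
          (Matrix.fromCols P c')).trans (Matrix.rank_mul_le_right _ _)
        have h2 := h t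
        rw [hr, Fintype.card_sum, Fintype.card_unit] at h1
        omega)
    obtain ⟨h1, h2⟩ := hb
    constructor
    · have := congrFun (congrFun h1 ()) ()
      rw [Matrix.mul_assoc] at this
      exact this
    · have e : c.transpose * N * P = (P.transpose * (N * c)).transpose := by
        rw [Matrix.transpose_mul, Matrix.transpose_mul, hN.eq, Matrix.transpose_transpose]
      rw [e, Matrix.mul_assoc, Matrix.mul_assoc _ N] at h2
      exact congrFun (congrFun h2 ()) ()
  -- the map `K → ℝ^ι`
  let φ : M.mulVecLin.ker →ₗ[ℝ] (ι → ℝ) :=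
    (P.transpose.mulVecLin ∘ₗ N.mulVecLin) ∘ₗ M.mulVecLin.ker.subtype
  have hφk : φ.ker.map M.mulVecLin.ker.subtype ≤ M.mulVecLin.ker ⊓ N.mulVecLin.ker := by
    rintro _ ⟨⟨k, hkM⟩, hkφ, rfl⟩
    refine ⟨hkM, ?_⟩
    have hkφ' : P.transpose.mulVec (N.mulVec k) = 0 := hkφ
    have hkM' : M.mulVec k = 0 := hkM
    change N.mulVec k = 0
    have hz : (WithLp.toLp 2 (N.mulVec k) : EuclideanSpace ℝ (Fin r)) = 0 := by
      apply hH.eigenvectorBasis.repr.injective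
      ext i
      rw [hH.eigenvectorBasis.repr_apply_apply, hH.eigenvectorBasis.repr_apply_apply, EuclideanSpace.inner_eq_star_dotProduct, inner_zero_right,
        star_trivial, dotProduct_comm]
      by_cases hi : hH.eigenvalues i = 0
      · refine (hk _ k ?_ hkM').1
        rw [hH.mulVec_eigenvectorBasis, hi, zero_smul]
      · exact congrFun hkφ' ⟨i, hi⟩
    exact congrArg WithLp.ofLp hz
  have h1 := φ.finrank_range_add_finrank_ker
  have h2 : Module.finrank ℝ φ.ker ≤ Module.finrank ℝ ↥(M.mulVecLin.ker ⊓ N.mulVecLin.ker) := by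
    rw [← Submodule.finrank_map_subtype_eq]
    exact Submodule.finrank_mono hφk
  have hD' : (D⁻¹).det ≠ 0 := by
    rw [Matrix.det_nonsing_inv]
    simpa using hD
  have h3 := LinearMap.BilinForm.finrank_orthogonal
    (LinearMap.BilinForm.nondegenerate_toBilin'_of_det_ne_zero' D⁻¹ hD') φ.range
  have h4 : φ.range ≤ (Matrix.toBilin' D⁻¹).orthogonal φ.range := by
    rintro _ ⟨k, rfl⟩
    rw [LinearMap.BilinForm.mem_orthogonal_iff]
    rintro _ ⟨k', rfl⟩
    rw [Matrix.toBilin'_apply']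
    exact (hk k'.1 k.1 k'.2 k.2).2
  have h5 := Submodule.finrank_mono h4
  have h6 := Submodule.finrank_le φ.range
  rw [h3] at h5
  rw [Module.finrank_fintype_fun_eq_card] at h5 h6
  omega

theorem aux_G {r : ℕ} (Z : Submodule ℝ (Fin r → ℝ)) (hZ : r ≤ Module.finrank ℝ Z + 5) :
    ∃ G : Matrix (Fin r) (Fin 5) ℝ, ∀ S : Matrix (Fin r) (Fin r) ℝ,
      (∀ z ∈ Z, S.mulVec z = 0) → S * G * G.transpose = S := by
  let e := (WithLp.linearEquiv 2 ℝ (Fin r → ℝ)).symm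
  let Z' : Submodule ℝ (EuclideanSpace ℝ (Fin r)) := Z.map e.toLinearMap
  have hZ' : Module.finrank ℝ Z' = Module.finrank ℝ Z := LinearEquiv.finrank_map_eq e Z
  have hW := Z'.finrank_add_finrank_orthogonal
  rw [hZ', finrank_euclideanSpace_fin] at hW
  let b := stdOrthonormalBasis ℝ Z'ᗮ
  let n := Module.finrank ℝ Z'ᗮ
  have hn : n ≤ 5 := by change Module.finrank ℝ Z'ᗮ ≤ 5; omega
  let G : Matrix (Fin r) (Fin n) ℝ := Matrix.of fun i j => (b j).1.ofLp i
  let F : Matrix (Fin n) (Fin 5) ℝ := Matrix.of fun i j => if Fin.castLE hn i = j then 1 else 0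
  have hF : F * F.transpose = 1 := by
    ext i j
    simp [F, Matrix.mul_apply, Matrix.one_apply, eq_comm]
  refine ⟨G * F, fun S hS => ?_⟩
  have e1 : S * (G * F) * (G * F).transpose = S * (G * G.transpose) := by
    rw [Matrix.transpose_mul]
    calc _ = S * (G * (F * F.transpose) * G.transpose) := by simp only [Matrix.mul_assoc]
      _ = _ := by rw [hF, Matrix.mul_one]
  rw [e1]
  have key : ∀ x : Fin r → ℝ, S.mulVec ((G * G.transpose).mulVec x) = S.mulVec x := by
    intro x
    let x' : EuclideanSpace ℝ (Fin r) := WithLp.toLp 2 x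
    have hx : (WithLp.toLp 2 ((G * G.transpose).mulVec x) : EuclideanSpace ℝ (Fin r))
        = Z'ᗮ.starProjection x' := by
      rw [Submodule.starProjection_apply, ← b.sum_repr (Z'ᗮ.orthogonalProjectionOnto x')]
      ext a
      rw [← Matrix.mulVec_mulVec]
      have h0 : ∀ j, (b.repr (Z'ᗮ.orthogonalProjectionOnto x')).ofLp j
          = G.transpose.mulVec x j := by
        intro j
        rw [b.repr_apply_apply, Submodule.coe_inner, ← Submodule.starProjection_apply,
          ← Submodule.inner_starProjection_left_eq_right,
          Submodule.starProjection_eq_self_iff.mpr (b j).2,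
          EuclideanSpace.inner_eq_star_dotProduct, star_trivial, dotProduct_comm]
        rfl
      simp only [h0]
      simp [Matrix.mulVec, dotProduct, G, mul_comm]
      rfl
    have h1 := Submodule.sub_starProjection_mem_orthogonal (K := Z'ᗮ) x'
    rw [Submodule.orthogonal_orthogonal, ← hx] at h1
    obtain ⟨z, hz, hze⟩ := h1
    have h2 : z = x - (G * G.transpose).mulVec x := congrArg WithLp.ofLp hze
    have h3 := hS z hz
    rw [h2, Matrix.mulVec_sub, sub_eq_zero] at h3
    exact h3.symm
  apply Matrix.ext_of_mulVec_single
  intro i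
  rw [← Matrix.mulVec_mulVec, key]

open MvPolynomial in
theorem aux_eval {r : ℕ} (A B C' : Matrix (Fin r) (Fin r) ℝ) (c : Fin 3 → ℝ) :
    MvPolynomial.eval c (((1 : Matrix (Fin r) (Fin r) (MvPolynomial (Fin 3) ℝ))
        + (X 0 : MvPolynomial (Fin 3) ℝ) • A.map C
        + (X 1 : MvPolynomial (Fin 3) ℝ) • B.map C
        + (X 2 : MvPolynomial (Fin 3) ℝ) • C'.map C).det)
      = (1 + (c 0 • A + c 1 • B + c 2 • C')).det := by
  rw [RingHom.map_det]
  congr 1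
  ext i j
  by_cases h : i = j
  · subst h; simp; ring
  · simp [h]

theorem stmt_16 (r : ℕ) (A B C' : Matrix (Fin r) (Fin r) ℝ)
    (hA : A.IsSymm) (hB : B.IsSymm) (hC : C'.IsSymm)
    (f : MvPolynomial (Fin 3) ℝ)
    (hf : f = ((1 : Matrix (Fin r) (Fin r) (MvPolynomial (Fin 3) ℝ))
        + (X 0 : MvPolynomial (Fin 3) ℝ) • A.map C
        + (X 1 : MvPolynomial (Fin 3) ℝ) • B.map C
        + (X 2 : MvPolynomial (Fin 3) ℝ) • C'.map C).det)
    (hdeg : f.totalDegree = 3) :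
    ∃ A' B' C'' : Matrix (Fin 5) (Fin 5) ℝ, A'.IsSymm ∧ B'.IsSymm ∧ C''.IsSymm ∧
      f = ((1 : Matrix (Fin 5) (Fin 5) (MvPolynomial (Fin 3) ℝ))
        + (X 0 : MvPolynomial (Fin 3) ℝ) • A'.map C
        + (X 1 : MvPolynomial (Fin 3) ℝ) • B'.map C
        + (X 2 : MvPolynomial (Fin 3) ℝ) • C''.map C).det := by
  let L : (Fin 3 → ℝ) → Matrix (Fin r) (Fin r) ℝ := fun c => c 0 • A + c 1 • B + c 2 • C'
  have hLs : ∀ c, (L c).IsSymm := fun c => ((hA.smul _).add (hB.smul _)).add (hC.smul _)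
  have hLadd : ∀ c d : Fin 3 → ℝ, ∀ t : ℝ, L c + t • L d = L (c + t • d) := by
    intro c d t
    simp only [L, Pi.add_apply, Pi.smul_apply, smul_eq_mul]
    module
  have hrank : ∀ c, (L c).rank ≤ 3 := by
    intro c
    let p : Polynomial ℝ := MvPolynomial.aeval (fun i => Polynomial.C (c i) * Polynomial.X) f
    have hp : p.natDegree ≤ 3 * 1 := MvPolynomial.aeval_natDegree_le f hdeg.le _
      (fun i => Polynomial.natDegree_C_mul_le _ _ |>.trans Polynomial.natDegree_X_le)
    refine (aux_rank (L c) (hLs c) p ?_).trans (by omega)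
    intro t
    have h1 : p.eval t = MvPolynomial.eval (fun i => c i * t) f := by
      change Polynomial.eval t (MvPolynomial.aeval _ f) = _
      rw [← Polynomial.coe_evalRingHom, MvPolynomial.aeval_def, MvPolynomial.hom_eval₂,
        MvPolynomial.eval, MvPolynomial.coe_eval₂Hom]
      congr 1
      · ext x; simp
      · ext i; simp
    rw [h1, hf, aux_eval]
    congr 2
    simp only [L]
    module
  -- a nonzero direction of maximal rank
  obtain ⟨c, hc0, hcmax⟩ : ∃ c : Fin 3 → ℝ, c ≠ 0 ∧ ∀ d, (L d).rank ≤ (L c).rank := by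
    have hfin : (Set.range fun c : {c : Fin 3 → ℝ // c ≠ 0} => (L c.1).rank).Finite :=
      (Set.finite_Iic 3).subset (by rintro _ ⟨c, rfl⟩; exact hrank _)
    have hne : (Set.range fun c : {c : Fin 3 → ℝ // c ≠ 0} => (L c.1).rank).Nonempty :=
      ⟨_, ⟨⟨fun _ => 1, fun h => one_ne_zero (congrFun h 0)⟩, rfl⟩⟩
    obtain ⟨_, ⟨c, rfl⟩, hm⟩ := hfin.exists_maximal hne
    refine ⟨c.1, c.2, fun d => ?_⟩
    by_cases hd : d = 0
    · subst hd; simp [L]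
    · rcases le_total (L d).rank (L c.1).rank with h | h
      · exact h
      · exact hm ⟨⟨d, hd⟩, rfl⟩ h
  -- any two further directions
  have hZ : ∀ d e : Fin 3 → ℝ, r ≤ Module.finrank ℝ
      ↥(((L c).mulVecLin.ker ⊓ (L d).mulVecLin.ker) ⊓
        ((L c).mulVecLin.ker ⊓ (L e).mulVecLin.ker)) + 5 := by
    intro d e
    have hd := aux_key (L c) (L d) (hLs c) (hLs d) (fun t => by rw [hLadd]; exact hcmax _)
    have he := aux_key (L c) (L e) (hLs c) (hLs e) (fun t => by rw [hLadd]; exact hcmax _)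
    have h1 := Submodule.finrank_sup_add_finrank_inf_eq
      ((L c).mulVecLin.ker ⊓ (L d).mulVecLin.ker) ((L c).mulVecLin.ker ⊓ (L e).mulVecLin.ker)
    have h2 : Module.finrank ℝ ↥(((L c).mulVecLin.ker ⊓ (L d).mulVecLin.ker) ⊔
        ((L c).mulVecLin.ker ⊓ (L e).mulVecLin.ker)) ≤ Module.finrank ℝ (L c).mulVecLin.ker :=
      Submodule.finrank_mono (sup_le inf_le_left inf_le_left)
    have h3 := (L c).mulVecLin.finrank_range_add_finrank_ker
    rw [Module.finrank_fin_fun] at h3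
    have h4 : (L c).rank = Module.finrank ℝ (L c).mulVecLin.range := rfl
    have h5 := hrank c
    omega
  obtain ⟨Z, hZr, hZA, hZB, hZC⟩ : ∃ Z : Submodule ℝ (Fin r → ℝ),
      r ≤ Module.finrank ℝ Z + 5 ∧ (∀ z ∈ Z, A.mulVec z = 0) ∧ (∀ z ∈ Z, B.mulVec z = 0) ∧
      (∀ z ∈ Z, C'.mulVec z = 0) := by
    have hL0 : L (Pi.single 0 1) = A := by simp [L]
    have hL1 : L (Pi.single 1 1) = B := by simp [L]
    have hL2 : L (Pi.single 2 1) = C' := by simp [L]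
    have hLv : ∀ z, (L c).mulVec z = c 0 • A.mulVec z + c 1 • B.mulVec z + c 2 • C'.mulVec z := by
      intro z; simp [L, Matrix.add_mulVec, Matrix.smul_mulVec]
    have hmem : ∀ (d e : Fin 3 → ℝ) (z : Fin r → ℝ),
        z ∈ (((L c).mulVecLin.ker ⊓ (L d).mulVecLin.ker) ⊓
        ((L c).mulVecLin.ker ⊓ (L e).mulVecLin.ker)) →
        (L c).mulVec z = 0 ∧ (L d).mulVec z = 0 ∧ (L e).mulVec z = 0 :=
      fun d e z hz => ⟨hz.1.1, hz.1.2, hz.2.2⟩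
    by_cases h0 : c 0 = 0
    · by_cases h1 : c 1 = 0
      · have h2 : c 2 ≠ 0 := by
          intro h2; apply hc0; ext i; fin_cases i <;> assumption
        refine ⟨_, hZ (Pi.single 0 1) (Pi.single 1 1), fun z hz => ?_, fun z hz => ?_,
          fun z hz => ?_⟩ <;> obtain ⟨h, ha, hb⟩ := hmem _ _ z hz <;>
          rw [hL0] at ha <;> rw [hL1] at hb
        · exact ha
        · exact hb
        · rw [hLv, ha, hb, smul_zero, smul_zero, zero_add, zero_add] at h
          exact (smul_eq_zero.mp h).resolve_left h2
      · refine ⟨_, hZ (Pi.single 0 1) (Pi.single 2 1), fun z hz => ?_, fun z hz => ?_,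
          fun z hz => ?_⟩ <;> obtain ⟨h, ha, hb⟩ := hmem _ _ z hz <;>
          rw [hL0] at ha <;> rw [hL2] at hb
        · exact ha
        · rw [hLv, ha, hb, smul_zero, smul_zero, zero_add, add_zero] at h
          exact (smul_eq_zero.mp h).resolve_left h1
        · exact hb
    · refine ⟨_, hZ (Pi.single 1 1) (Pi.single 2 1), fun z hz => ?_, fun z hz => ?_,
          fun z hz => ?_⟩ <;> obtain ⟨h, ha, hb⟩ := hmem _ _ z hz <;>
          rw [hL1] at ha <;> rw [hL2] at hb
      · rw [hLv, ha, hb, smul_zero, smul_zero, add_zero, add_zero] at h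
        exact (smul_eq_zero.mp h).resolve_left h0
      · exact ha
      · exact hb
  obtain ⟨G, hG⟩ := aux_G Z hZr
  have hsym : ∀ S : Matrix (Fin r) (Fin r) ℝ, S.IsSymm → (G.transpose * (S * G)).IsSymm := by
    intro S hS
    rw [Matrix.IsSymm, Matrix.transpose_mul, Matrix.transpose_mul, hS.eq,
      Matrix.transpose_transpose, Matrix.mul_assoc]
  refine ⟨_, _, _, hsym A hA, hsym B hB, hsym C' hC, ?_⟩
  apply MvPolynomial.funext
  intro x
  rw [hf, aux_eval, aux_eval]
  have e1 : x 0 • (G.transpose * (A * G)) + x 1 • (G.transpose * (B * G))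
      + x 2 • (G.transpose * (C' * G)) = G.transpose * (L x * G) := by
    simp [L, Matrix.add_mul, Matrix.mul_add]
  rw [e1, Matrix.det_one_add_mul_comm]
  congr 2
  simp only [L, Matrix.add_mul, Matrix.smul_mul, hG A hZA, hG B hZB, hG C' hZC]
end

section
/- Let f be a cubic polynomial in ℝ[x,y,z] whose homogenization defines a smooth surface in ℙ³(ℂ), and suppose there are no real symmetric 4×4 matrices realizing the set {f ≥ 0 containing a given interior point} as a spectrahedron via l·f^h = det of a symmetric pencil. Concretely: there is no linear form l ∈ ℝ[w,x,y,z] and real symmetric 4×4 matrices A₀,…,A₃, with A₀ positive definite after normalization, such that l(w,x,y,z)·f^h(w,x,y,z) = det(A₀w + A₁x + A₂y + A₃z). -/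
open MvPolynomial

abbrev M4 := Matrix (Fin 4) (Fin 4) ℝ

def Good (S : Submodule ℝ M4) : Prop :=
  (∃ O : M4, O.transpose * O = 1 ∧ ∀ N ∈ S, ∀ j, (O.transpose * N * O) 0 j = 0) ∨
  (∃ O : M4, O.transpose * O = 1 ∧ ∀ N ∈ S, (O.transpose * N * O) 0 0 = 0 ∧
    (O.transpose * N * O) 0 1 = 0 ∧ (O.transpose * N * O) 0 2 = 0 ∧
    (O.transpose * N * O) 1 1 = 0 ∧ (O.transpose * N * O) 1 2 = 0)

def conjL (O : M4) : M4 →ₗ[ℝ] M4 :=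
  (LinearMap.mulRight ℝ O).comp (LinearMap.mulLeft ℝ O.transpose)

lemma conjL_apply (O N : M4) : conjL O N = O.transpose * N * O := rfl

lemma Good.transport {S : Submodule ℝ M4} {O : M4} (hO : O.transpose * O = 1)
    (h : Good (S.map (conjL O))) : Good S := by
  have key : ∀ (R N : M4), R.transpose * (conjL O N) * R = (O * R).transpose * N * (O * R) := by
    intro R N
    simp [conjL_apply, Matrix.transpose_mul, Matrix.mul_assoc]
  have key2 : ∀ R : M4, R.transpose * R = 1 → (O * R).transpose * (O * R) = 1 := by
    intro R hR
    rw [Matrix.transpose_mul, Matrix.mul_assoc, ← Matrix.mul_assoc O.transpose, hO,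
      Matrix.one_mul, hR]
  rcases h with ⟨R, hR, h⟩ | ⟨R, hR, h⟩
  · refine Or.inl ⟨O * R, key2 R hR, fun N hN => ?_⟩
    have := h _ (Submodule.mem_map_of_mem hN)
    rwa [key] at this
  · refine Or.inr ⟨O * R, key2 R hR, fun N hN => ?_⟩
    have := h _ (Submodule.mem_map_of_mem hN)
    rwa [key] at this

def SymSing (S : Submodule ℝ M4) : Prop := ∀ N ∈ S, N.IsSymm ∧ N.det = 0

lemma SymSing.map {S : Submodule ℝ M4} (h : SymSing S) (O : M4) : SymSing (S.map (conjL O)) := by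
  rintro _ ⟨N, hN, rfl⟩
  obtain ⟨h1, h2⟩ := h N hN
  refine ⟨?_, ?_⟩
  · rw [Matrix.IsSymm, conjL_apply, Matrix.transpose_mul, Matrix.transpose_mul, h1.eq,
      Matrix.transpose_transpose, Matrix.mul_assoc]
  · simp [conjL_apply, Matrix.det_mul, h2]

/-- explicit determinant of a symmetric matrix -/
def D4 {R : Type*} [CommRing R] (a b c d e f g h i j : R) : R :=
  Matrix.det !![a, b, c, d; b, e, f, g; c, f, h, i; d, g, i, j]

lemma D4_eq {R : Type*} [CommRing R] (a b c d e f g h i j : R) :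
    D4 a b c d e f g h i j =
     a * (e * (h * j - i * i) - f * (f * j - i * g) + g * (f * i - h * g))
     - b * (b * (h * j - i * i) - f * (c * j - i * d) + g * (c * i - h * d))
     + c * (b * (f * j - g * i) - e * (c * j - i * d) + g * (c * g - f * d))
     - d * (b * (f * i - g * h) - e * (c * i - h * d) + f * (c * g - f * d)) := by
  simp [D4, Matrix.det_succ_row_zero, Fin.sum_univ_succ, Fin.succAbove]
  ring

lemma det_symm {R : Type*} [CommRing R] {N : Matrix (Fin 4) (Fin 4) R} (h : N.IsSymm) :
    N.det = D4 (N 0 0) (N 0 1) (N 0 2) (N 0 3) (N 1 1) (N 1 2) (N 1 3) (N 2 2) (N 2 3) (N 3 3) := by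
  unfold D4
  congr 1
  ext i j
  fin_cases i <;> fin_cases j <;> simp [h.apply] <;> exact h.apply _ _

/-- last step -/
lemma good_step3 (S : Submodule ℝ M4) (hS : SymSing S)
    (h0 : ∀ N ∈ S, N 0 0 = 0 ∧ N 0 1 = 0 ∧ N 0 2 = 0) (N1 : M4) (hN1 : N1 ∈ S)
    (hne : N1 0 3 ≠ 0) : Good S := by
  have hC0 : ∀ N ∈ S, N 0 3 ≠ 0 → N 1 1 * N 2 2 - N 1 2 ^ 2 = 0 := by
    intro N hN hn
    obtain ⟨hs, hd⟩ := hS N hN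
    obtain ⟨a, b, c⟩ := h0 N hN
    rw [det_symm hs, D4_eq, a, b, c] at hd
    have : N 0 3 ^ 2 * (N 1 1 * N 2 2 - N 1 2 ^ 2) = 0 := by linear_combination -hd
    simpa [hn] using this
  have hC : ∀ N ∈ S, N 1 1 * N 2 2 - N 1 2 ^ 2 = 0 := by
    intro N hN
    by_cases hn : N 0 3 = 0
    · have h1 := hC0 (N + N1) (S.add_mem hN hN1) (by simp [hn, hne])
      have h2 := hC0 (N - N1) (S.sub_mem hN hN1) (by simp [hn, hne])
      have h3 := hC0 N1 hN1 hne
      simp only [Matrix.add_apply, Matrix.sub_apply] at h1 h2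
      linear_combination (h1 + h2) / 2 - h3
    · exact hC0 N hN hn
  by_cases hz : ∀ N ∈ S, N 1 1 = 0 ∧ N 1 2 = 0
  · refine Or.inr ⟨1, by simp, fun N hN => ?_⟩
    simpa using ⟨(h0 N hN).1, (h0 N hN).2.1, (h0 N hN).2.2, hz N hN⟩
  · push Not at hz
    obtain ⟨N2, hN2, hz⟩ := hz
    have hdet2 := hC N2 hN2
    have h11 : N2 1 1 ≠ 0 := by
      intro h
      apply hz h
      rw [h] at hdet2
      simpa using hdet2
    -- kernel direction (N12, -N11)
    set r := Real.sqrt (N2 1 2 ^ 2 + N2 1 1 ^ 2) with hr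
    have hpos : 0 < N2 1 2 ^ 2 + N2 1 1 ^ 2 := by positivity
    have hr2 : r ^ 2 = N2 1 2 ^ 2 + N2 1 1 ^ 2 := Real.sq_sqrt hpos.le
    have hr0 : r ≠ 0 := (Real.sqrt_pos.mpr hpos).ne'
    obtain ⟨a, ha⟩ : ∃ a, a = N2 1 2 / r := ⟨_, rfl⟩
    obtain ⟨b, hb⟩ : ∃ b, b = -N2 1 1 / r := ⟨_, rfl⟩
    have hab : a ^ 2 + b ^ 2 = 1 := by
      rw [ha, hb]; field_simp; rw [hr2]
    have hk1 : N2 1 1 * a + N2 1 2 * b = 0 := by rw [ha, hb]; field_simp; ring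
    have hk2 : N2 1 2 * a + N2 2 2 * b = 0 := by
      rw [ha, hb]; field_simp; linear_combination -hdet2
    let O : M4 := !![1, 0, 0, 0; 0, a, -b, 0; 0, b, a, 0; 0, 0, 0, 1]
    have hO : O.transpose * O = 1 := by
      ext i j
      fin_cases i <;> fin_cases j <;>
        simp [O, Matrix.mul_apply, Fin.sum_univ_four] <;> first | linear_combination hab | ring
    refine Or.inr ⟨O, hO, fun N hN => ?_⟩
    obtain ⟨g0, g1, g2⟩ := h0 N hN
    have hs := (hS N hN).1
    have s21 : N 2 1 = N 1 2 := hs.apply _ _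
    have t21 : N2 2 1 = N2 1 2 := (hS N2 hN2).1.apply _ _
    have hd := hC N hN
    have hp := hC (N + N2) (S.add_mem hN hN2)
    simp only [Matrix.add_apply] at hp
    have e11 : (O.transpose * N * O) 1 1 = N 1 1 * a ^ 2 + 2 * N 1 2 * a * b + N 2 2 * b ^ 2 := by
      simp [O, Matrix.mul_apply, Fin.sum_univ_four, s21]; ring
    have e12 : (O.transpose * N * O) 1 2 =
        - N 1 1 * a * b + N 1 2 * (a ^ 2 - b ^ 2) + N 2 2 * a * b := by
      simp [O, Matrix.mul_apply, Fin.sum_univ_four, s21]; ring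
    have hpol : N 1 1 * N2 2 2 + N2 1 1 * N 2 2 - 2 * N 1 2 * N2 1 2 = 0 := by
      linear_combination hp - hd - hdet2
    have hb0 : b ≠ 0 := by
      rw [hb]; exact div_ne_zero (neg_ne_zero.mpr h11) hr0
    have f11 : N 1 1 * a ^ 2 + 2 * N 1 2 * a * b + N 2 2 * b ^ 2 = 0 := by
      have h22 : N2 1 1 * (N 1 1 * a ^ 2 + 2 * N 1 2 * a * b + N 2 2 * b ^ 2) = 0 := by
        linear_combination b ^ 2 * hpol + (N 1 1 * a + 2 * N 1 2 * b)* hk1 - N 1 1 * b * hk2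
      simpa [h11] using h22
    have f12 : - N 1 1 * a * b + N 1 2 * (a ^ 2 - b ^ 2) + N 2 2 * a * b = 0 := by
      have : (- N 1 1 * a * b + N 1 2 * (a ^ 2 - b ^ 2) + N 2 2 * a * b) ^ 2 = 0 := by
        linear_combination (N 1 1 * b ^ 2 - 2 * N 1 2 * a * b + N 2 2 * a ^ 2) * f11
          - (a^2+b^2)^2 * hd
      simpa using this
    refine ⟨?_, ?_, ?_, by rw [e11, f11], by rw [e12, f12]⟩
    · simp [O, Matrix.mul_apply, Fin.sum_univ_four, g0]
    · simp [O, Matrix.mul_apply, Fin.sum_univ_four, g1, g2]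
    · simp [O, Matrix.mul_apply, Fin.sum_univ_four, g1, g2]

lemma orth_ext (u : Fin 4 → ℝ) (h0 : u 0 = 0) (h1 : u 1 ^ 2 + u 2 ^ 2 + u 3 ^ 2 = 1) :
    ∃ O : M4, O.transpose * O = 1 ∧ O 0 0 = 1 ∧ O 1 0 = 0 ∧ O 2 0 = 0 ∧ O 3 0 = 0 ∧
      ∀ i, O i 3 = u i := by
  let v : Fin 4 → EuclideanSpace ℝ (Fin 4) :=
    ![WithLp.toLp 2 ![1, 0, 0, 0], 0, 0, WithLp.toLp 2 u]
  have hv : Orthonormal ℝ (Set.domRestrict ({0, 3} : Set (Fin 4)) v) := by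
    rw [orthonormal_iff_ite]
    rintro ⟨i, hi⟩ ⟨j, hj⟩
    simp only [Set.mem_insert_iff, Set.mem_singleton_iff] at hi hj
    rcases hi with rfl | rfl <;> rcases hj with rfl | rfl <;>
      simp only [v, Set.domRestrict_apply, PiLp.inner_apply, Fin.sum_univ_four] <;>
      simp [h0]
    linear_combination h1
  obtain ⟨b, hb⟩ := hv.exists_orthonormalBasis_extension_of_card_eq (by simp)
  have b0 := hb 0 (by simp)
  have b3 := hb 3 (by simp)
  refine ⟨Matrix.of fun i j => b j i, ?_, ?_, ?_, ?_, ?_, ?_⟩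
  · ext i j
    have := orthonormal_iff_ite.mp b.orthonormal i j
    simp only [PiLp.inner_apply] at this
    simp only [Matrix.mul_apply, Matrix.transpose_apply, Matrix.of_apply, Matrix.one_apply]
    rw [← this]
    refine Finset.sum_congr rfl fun k _ => ?_
    simp [mul_comm]
  all_goals simp [b0, b3, v]

lemma good_step2 (S : Submodule ℝ M4) (hS : SymSing S) (d : Fin 4 → ℝ)
    (hd0 : d 0 = 0) (h1 : d 1 ≠ 0) (h2 : d 2 ≠ 0) (h3 : d 3 ≠ 0)
    (hN0 : Matrix.diagonal d ∈ S) : Good S := by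
  have hexp : ∀ N ∈ S, N 0 0 = 0 ∧
      N 0 1 ^ 2 * (d 2 * d 3) + N 0 2 ^ 2 * (d 1 * d 3) + N 0 3 ^ 2 * (d 1 * d 2) = 0 := by
    intro N hN
    have ht : ∀ t : ℝ, D4 (t * N 0 0) (t * N 0 1) (t * N 0 2) (t * N 0 3) (d 1 + t * N 1 1)
        (t * N 1 2) (t * N 1 3) (d 2 + t * N 2 2) (t * N 2 3) (d 3 + t * N 3 3) = 0 := by
      intro t
      obtain ⟨hs, hd⟩ := hS _ (S.add_mem hN0 (S.smul_mem t hN))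
      rw [det_symm hs] at hd
      simpa [Matrix.diagonal_apply, hd0] using hd
    have p1 := ht 1
    have p2 := ht (-1)
    have p3 := ht 2
    have p4 := ht (-2)
    rw [D4_eq] at p1 p2 p3 p4
    have q1 : N 0 0 * (d 1 * d 2 * d 3) = 0 := by
      linear_combination (8 * (p1 - p2) - (p3 - p4)) / 12
    have q0 : N 0 0 = 0 := by simpa [h1, h2, h3] using q1
    refine ⟨q0, ?_⟩
    rw [q0] at p1 p2 p3 p4
    linear_combination -(16 * (p1 + p2) - (p3 + p4)) / 24
  by_cases hz : ∀ N ∈ S, N 0 1 = 0 ∧ N 0 2 = 0 ∧ N 0 3 = 0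
  · refine Or.inl ⟨1, by simp, fun N hN j => ?_⟩
    simp only [Matrix.transpose_one, Matrix.one_mul, Matrix.mul_one]
    fin_cases j
    exacts [(hexp N hN).1, (hz N hN).1, (hz N hN).2.1, (hz N hN).2.2]
  · push Not at hz
    obtain ⟨N1, hN1, hz⟩ := hz
    have hpos : 0 < N1 0 1 ^ 2 + N1 0 2 ^ 2 + N1 0 3 ^ 2 := by
      by_contra hcon
      have e1 : N1 0 1 = 0 := by nlinarith [sq_nonneg (N1 0 1), sq_nonneg (N1 0 2), sq_nonneg (N1 0 3)]
      have e2 : N1 0 2 = 0 := by nlinarith [sq_nonneg (N1 0 1), sq_nonneg (N1 0 2), sq_nonneg (N1 0 3)]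
      have e3 : N1 0 3 = 0 := by nlinarith [sq_nonneg (N1 0 1), sq_nonneg (N1 0 2), sq_nonneg (N1 0 3)]
      exact hz e1 e2 e3
    set r := Real.sqrt (N1 0 1 ^ 2 + N1 0 2 ^ 2 + N1 0 3 ^ 2) with hr
    have hr2 : r ^ 2 = N1 0 1 ^ 2 + N1 0 2 ^ 2 + N1 0 3 ^ 2 := Real.sq_sqrt hpos.le
    have hr0 : r ≠ 0 := (Real.sqrt_pos.mpr hpos).ne'
    obtain ⟨O, hO, o0, o1, o2, o3, ou⟩ := orth_ext ![0, N1 0 1 / r, N1 0 2 / r, N1 0 3 / r] rfl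
      (by simp; field_simp; rw [hr2])
    have u1 : r * O 1 3 = N1 0 1 := by rw [ou]; simp; field_simp
    have u2 : r * O 2 3 = N1 0 2 := by rw [ou]; simp; field_simp
    have u3 : r * O 3 3 = N1 0 3 := by rw [ou]; simp; field_simp
    have u0 : O 0 3 = 0 := by rw [ou]; simp
    have orth : ∀ i j, O 0 i * O 0 j + O 1 i * O 1 j + O 2 i * O 2 j + O 3 i * O 3 j
        = (1 : M4) i j := by
      intro i j
      rw [← hO]; simp [Matrix.mul_apply, Fin.sum_univ_four]
    -- parallel
    have hpar : ∀ N ∈ S, N 0 2 * N1 0 3 - N 0 3 * N1 0 2 = 0 ∧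
        N 0 3 * N1 0 1 - N 0 1 * N1 0 3 = 0 ∧ N 0 1 * N1 0 2 - N 0 2 * N1 0 1 = 0 := by
      intro N hN
      have a1 := (hexp N hN).2
      have a2 := (hexp N1 hN1).2
      have a3 := (hexp _ (S.add_mem hN hN1)).2
      simp only [Matrix.add_apply] at a3
      have a4 : N 0 1 * N1 0 1 * (d 2 * d 3) + N 0 2 * N1 0 2 * (d 1 * d 3) +
          N 0 3 * N1 0 3 * (d 1 * d 2) = 0 := by linear_combination (a3 - a1 - a2) / 2
      clear a3
      obtain ⟨e1, he1⟩ : ∃ e, e = d 2 * d 3 := ⟨_, rfl⟩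
      obtain ⟨e2, he2⟩ : ∃ e, e = d 1 * d 3 := ⟨_, rfl⟩
      obtain ⟨e3, he3⟩ : ∃ e, e = d 1 * d 2 := ⟨_, rfl⟩
      have n1 : e1 ≠ 0 := by rw [he1]; exact mul_ne_zero h2 h3
      have n2 : e2 ≠ 0 := by rw [he2]; exact mul_ne_zero h1 h3
      have n3 : e3 ≠ 0 := by rw [he3]; exact mul_ne_zero h1 h2
      rw [← he1, ← he2, ← he3] at a1 a2 a4
      generalize N 0 1 = x1 at *
      generalize N 0 2 = x2 at *
      generalize N 0 3 = x3 at *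
      generalize N1 0 1 = y1 at *
      generalize N1 0 2 = y2 at *
      generalize N1 0 3 = y3 at *
      obtain ⟨w1, hw1⟩ : ∃ w, w = x2 * y3 - x3 * y2 := ⟨_, rfl⟩
      obtain ⟨w2, hw2⟩ : ∃ w, w = x3 * y1 - x1 * y3 := ⟨_, rfl⟩
      obtain ⟨w3, hw3⟩ : ∃ w, w = x1 * y2 - x2 * y1 := ⟨_, rfl⟩
      have c1 : w2 * (e3 * x3) = w3 * (e2 * x2) := by
        rw [hw2, hw3]; linear_combination y1 * a1 - x1 * a4
      have c2 : w3 * (e1 * x1) = w1 * (e3 * x3) := by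
        rw [hw3, hw1]; linear_combination y2 * a1 - x2 * a4
      have c3 : w1 * (e2 * x2) = w2 * (e1 * x1) := by
        rw [hw1, hw2]; linear_combination y3 * a1 - x3 * a4
      have c4 : w2 * (e3 * y3) = w3 * (e2 * y2) := by
        rw [hw2, hw3]; linear_combination y1 * a4 - x1 * a2
      have c5 : w3 * (e1 * y1) = w1 * (e3 * y3) := by
        rw [hw3, hw1]; linear_combination y2 * a4 - x2 * a2
      have c6 : w1 * (e2 * y2) = w2 * (e1 * y1) := by
        rw [hw1, hw2]; linear_combination y3 * a4 - x3 * a2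
      have g1 : e2 * e3 * w1 ^ 2 = 0 := by
        have : e2 * e3 * w1 ^ 2 = w1 * (e2 * x2) * (e3 * y3) - w1 * (e3 * x3) * (e2 * y2) := by
          rw [hw1]; ring
        rw [this]; linear_combination (e3 * y3) * c3 + (e2 * y2) * c2 + e1 * x1 * c4
      have g2 : e1 * e3 * w2 ^ 2 = 0 := by
        have : e1 * e3 * w2 ^ 2 = w2 * (e3 * x3) * (e1 * y1) - w2 * (e1 * x1) * (e3 * y3) := by
          rw [hw2]; ring
        rw [this]; linear_combination (e1 * y1) * c1 + (e3 * y3) * c3 + e2 * x2 * c5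
      have g3 : e1 * e2 * w3 ^ 2 = 0 := by
        have : e1 * e2 * w3 ^ 2 = w3 * (e1 * x1) * (e2 * y2) - w3 * (e2 * x2) * (e1 * y1) := by
          rw [hw3]; ring
        rw [this]; linear_combination (e2 * y2) * c2 + (e1 * y1) * c1 + e3 * x3 * c6
      rw [← hw1, ← hw2, ← hw3]
      refine ⟨?_, ?_, ?_⟩
      · simpa [n2, n3] using g1
      · simpa [n1, n3] using g2
      · simpa [n1, n2] using g3
    apply Good.transport hO
    have o0j : ∀ j, j ≠ 0 → O 0 j = 0 := by
      intro j hj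
      have := orth 0 j
      rw [o0, o1, o2, o3, Matrix.one_apply_ne hj.symm] at this
      linear_combination this
    have row0 : ∀ N ∈ S, ∀ j, conjL O N 0 j = N 0 1 * O 1 j + N 0 2 * O 2 j + N 0 3 * O 3 j := by
      intro N hN j
      simp [conjL_apply, Matrix.mul_apply, Fin.sum_univ_four, o0, o1, o2, o3, (hexp N hN).1]
    refine good_step3 _ (hS.map O) ?_ (conjL O N1) (Submodule.mem_map_of_mem hN1) ?_
    · rintro _ ⟨N, hN, rfl⟩
      have key : ∀ j, j ≠ 0 → j ≠ 3 → conjL O N 0 j = 0 := by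
        intro j hj hj3
        rw [row0 N hN]
        have q := orth j 3
        rw [u0, Matrix.one_apply_ne hj3] at q
        obtain ⟨p1, p2, p3⟩ := hpar N hN
        rw [← u2, ← u3] at p1
        rw [← u1, ← u3] at p2
        rw [← u1, ← u2] at p3
        have p1' : N 0 2 * O 3 3 - N 0 3 * O 2 3 = 0 := by
          have : r * (N 0 2 * O 3 3 - N 0 3 * O 2 3) = 0 := by linear_combination p1
          simpa [hr0] using this
        have p2' : N 0 3 * O 1 3 - N 0 1 * O 3 3 = 0 := by
          have : r * (N 0 3 * O 1 3 - N 0 1 * O 3 3) = 0 := by linear_combination p2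
          simpa [hr0] using this
        have p3' : N 0 1 * O 2 3 - N 0 2 * O 1 3 = 0 := by
          have : r * (N 0 1 * O 2 3 - N 0 2 * O 1 3) = 0 := by linear_combination p3
          simpa [hr0] using this
        have n := orth 3 3
        rw [u0, Matrix.one_apply_eq] at n
        -- N_0k = φ O_k3 with φ = Σ N_0k O_k3
        obtain ⟨φ, hφ⟩ : ∃ φ, φ = N 0 1 * O 1 3 + N 0 2 * O 2 3 + N 0 3 * O 3 3 := ⟨_, rfl⟩
        have k1 : N 0 1 = φ * O 1 3 := by
          rw [hφ]; linear_combination -N 0 1 * n + O 2 3 * p3' - O 3 3 * p2'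
        have k2 : N 0 2 = φ * O 2 3 := by
          rw [hφ]; linear_combination -N 0 2 * n + O 3 3 * p1' - O 1 3 * p3'
        have k3 : N 0 3 = φ * O 3 3 := by
          rw [hφ]; linear_combination -N 0 3 * n + O 1 3 * p2' - O 2 3 * p1'
        rw [k1, k2, k3]
        linear_combination φ * q
      refine ⟨?_, key 1 (by decide) (by decide), key 2 (by decide) (by decide)⟩
      rw [row0 N hN, o1, o2, o3]; ring
    · rw [row0 N1 hN1]
      intro h
      rw [← u1, ← u2, ← u3] at h
      have n := orth 3 3
      rw [u0, Matrix.one_apply_eq] at n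
      apply hr0
      linear_combination h - r * n

/-- sum of principal 3-minors -/
def e3 {R : Type*} [CommRing R] (N : Matrix (Fin 4) (Fin 4) R) : R := N.adjugate.trace

lemma e3_conj (N O : M4) (hO : O.transpose * O = 1) : e3 (conjL O N) = e3 N := by
  unfold e3
  have h2 : O * O.transpose = 1 := mul_eq_one_comm.mp hO
  rw [conjL_apply, Matrix.adjugate_mul_distrib, Matrix.adjugate_mul_distrib, Matrix.trace_mul_comm,
    Matrix.mul_assoc, ← Matrix.adjugate_mul_distrib, h2]
  simp

lemma good_main (S : Submodule ℝ M4) (hS : SymSing S) : (∀ N ∈ S, e3 N = 0) ∨ Good S := by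
  by_cases h : ∀ N ∈ S, e3 N = 0
  · exact Or.inl h
  right
  push Not at h
  obtain ⟨N0, hN0, hne⟩ := h
  obtain ⟨hs, hd⟩ := hS N0 hN0
  have hH : N0.IsHermitian := by
    rw [Matrix.IsHermitian, Matrix.conjTranspose_eq_transpose_of_trivial]; exact hs
  have hdp := hH.det_eq_prod_eigenvalues
  rw [hd, eq_comm, Finset.prod_eq_zero_iff] at hdp
  obtain ⟨i, -, hi⟩ := hdp
  let σ := Equiv.swap 0 i
  let U : M4 := hH.eigenvectorUnitary
  let O : M4 := U.submatrix id σ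
  have hU : U.transpose * U = 1 := by
    have := Unitary.coe_star_mul_self hH.eigenvectorUnitary
    rwa [Matrix.star_eq_conjTranspose, Matrix.conjTranspose_eq_transpose_of_trivial] at this
  have hO : O.transpose * O = 1 := by
    have : O.transpose * O = (U.transpose * U).submatrix σ σ := by
      ext a b; simp [O, Matrix.mul_apply]
    rw [this, hU]; simp
  have hdiag : conjL O N0 = Matrix.diagonal (hH.eigenvalues ∘ σ) := by
    have h1 : conjL O N0 = (U.transpose * N0 * U).submatrix σ σ := by
      ext a b; simp [O, conjL_apply, Matrix.mul_apply]
    have h2 : U.transpose * N0 * U = Matrix.diagonal hH.eigenvalues := by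
      have := hH.conjStarAlgAut_star_eigenvectorUnitary
      rw [Unitary.conjStarAlgAut_star_apply] at this
      simp only [Matrix.star_eq_conjTranspose, Matrix.conjTranspose_eq_transpose_of_trivial] at this
      exact this
    rw [h1, h2, Matrix.submatrix_diagonal_equiv]
  have he := e3_conj N0 O hO
  rw [hdiag] at he
  have d0 : (hH.eigenvalues ∘ σ) 0 = 0 := by simpa [σ] using hi
  have hprod : e3 (Matrix.diagonal (hH.eigenvalues ∘ σ)) = (hH.eigenvalues ∘ σ) 1 *
      (hH.eigenvalues ∘ σ) 2 * (hH.eigenvalues ∘ σ) 3 := by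
    generalize hH.eigenvalues ∘ σ = d at *
    simp only [e3, Matrix.adjugate_diagonal, Matrix.trace_diagonal, Fin.sum_univ_four]
    have q0 : Finset.univ.erase (0 : Fin 4) = {1, 2, 3} := by decide
    have q1 : Finset.univ.erase (1 : Fin 4) = {0, 2, 3} := by decide
    have q2 : Finset.univ.erase (2 : Fin 4) = {0, 1, 3} := by decide
    have q3 : Finset.univ.erase (3 : Fin 4) = {0, 1, 2} := by decide
    simp [q0, q1, q2, q3, d0, mul_assoc]
  rw [← he, hprod] at hne
  apply Good.transport hO
  refine good_step2 _ (hS.map O) (hH.eigenvalues ∘ σ) d0 ?_ ?_ ?_ ?_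
  · intro h; exact hne (by rw [h]; ring)
  · intro h; exact hne (by rw [h]; ring)
  · intro h; exact hne (by rw [h]; ring)
  · rw [← hdiag]; exact Submodule.mem_map_of_mem hN0

lemma posDef_congr (A : M4) (hA : A.PosDef) : ∃ P : M4, P.det ≠ 0 ∧ P.transpose * A * P = 1 := by
  have hH := hA.isHermitian
  let U : M4 := hH.eigenvectorUnitary
  have hU : U.transpose * U = 1 := by
    have := Unitary.coe_star_mul_self hH.eigenvectorUnitary
    rwa [Matrix.star_eq_conjTranspose, Matrix.conjTranspose_eq_transpose_of_trivial] at this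
  have h2 : U.transpose * A * U = Matrix.diagonal hH.eigenvalues := by
    have := hH.conjStarAlgAut_star_eigenvectorUnitary
    rw [Unitary.conjStarAlgAut_star_apply] at this
    simp only [Matrix.star_eq_conjTranspose, Matrix.conjTranspose_eq_transpose_of_trivial] at this
    exact this
  have hpos := hA.eigenvalues_pos
  let D : M4 := Matrix.diagonal fun i => (Real.sqrt (hH.eigenvalues i))⁻¹
  have h3 : (U * D).transpose * A * (U * D) = 1 := by
    have : (U * D).transpose * A * (U * D) = D.transpose * (U.transpose * A * U) * D := by
      simp only [Matrix.transpose_mul, Matrix.mul_assoc]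
    rw [this, h2]
    simp only [D, Matrix.diagonal_transpose, Matrix.diagonal_mul_diagonal]
    rw [← Matrix.diagonal_one]
    congr 1
    ext i
    have h := Real.sqrt_pos.mpr (hpos i)
    have h' := Real.mul_self_sqrt (hpos i).le
    field_simp
    nlinarith
  refine ⟨U * D, ?_, h3⟩
  intro h
  have := congrArg Matrix.det h3
  simp [Matrix.det_mul] at this h
  rcases h with h | h <;> simp [h] at this

lemma bin_quad (α β γ : ℂ) : ∃ s t : ℂ, (s ≠ 0 ∨ t ≠ 0) ∧ s ^ 2 * α + s * t * β + t ^ 2 * γ = 0 := by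
  by_cases h : α = 0
  · exact ⟨1, 0, by simp, by simp [h]⟩
  · obtain ⟨z, hz⟩ := IsAlgClosed.exists_pow_nat_eq (discrim α β γ) (n := 2) (by norm_num)
    obtain ⟨x, hx⟩ := exists_quadratic_eq_zero h (c := γ) (b := β) ⟨z, by rw [← hz]; ring⟩
    exact ⟨x, 1, by simp, by linear_combination hx⟩

lemma quad_expand (Q : Matrix (Fin 3) (Fin 3) ℂ) (u v : Fin 3 → ℂ) (s t : ℂ) :
    (s • u + t • v) ⬝ᵥ (Q.mulVec (s • u + t • v)) =
      s ^ 2 * (u ⬝ᵥ Q.mulVec u) + s * t * (u ⬝ᵥ Q.mulVec v + v ⬝ᵥ Q.mulVec u)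
        + t ^ 2 * (v ⬝ᵥ Q.mulVec v) := by
  simp only [Matrix.mulVec_add, Matrix.mulVec_smul, add_dotProduct, dotProduct_add,
    smul_dotProduct, dotProduct_smul, smul_eq_mul]
  ring

lemma deg_conic (Q Q' : Matrix (Fin 3) (Fin 3) ℂ) (hQ : Q.IsSymm) (k : Fin 3 → ℂ) (hk : k ≠ 0)
    (hQk : Q.mulVec k = 0) : ∃ v : Fin 3 → ℂ, v ≠ 0 ∧ v ⬝ᵥ Q.mulVec v = 0 ∧ v ⬝ᵥ Q'.mulVec v = 0 := by
  obtain ⟨i, hi⟩ := Function.ne_iff.mp hk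
  obtain ⟨s, t, hst, h⟩ := bin_quad
    ((Pi.single (i + 1) 1 : Fin 3 → ℂ) ⬝ᵥ Q.mulVec (Pi.single (i + 1) 1))
    ((Pi.single (i + 1) 1 : Fin 3 → ℂ) ⬝ᵥ Q.mulVec (Pi.single (i + 2) 1) +
      (Pi.single (i + 2) 1 : Fin 3 → ℂ) ⬝ᵥ Q.mulVec (Pi.single (i + 1) 1))
    ((Pi.single (i + 2) 1 : Fin 3 → ℂ) ⬝ᵥ Q.mulVec (Pi.single (i + 2) 1))
  rw [← quad_expand] at h
  obtain ⟨m, hm⟩ : ∃ m : Fin 3 → ℂ, m = s • Pi.single (i + 1) 1 + t • Pi.single (i + 2) 1 := ⟨_, rfl⟩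
  rw [← hm] at h
  have m0 : m i = 0 := by
    rw [hm]; fin_cases i <;> simp
  have m1 : m (i + 1) = s := by
    rw [hm]; fin_cases i <;> simp
  have m2 : m (i + 2) = t := by
    rw [hm]; fin_cases i <;> simp
  obtain ⟨x, y, hxy, h'⟩ := bin_quad (k ⬝ᵥ Q'.mulVec k) (k ⬝ᵥ Q'.mulVec m + m ⬝ᵥ Q'.mulVec k)
    (m ⬝ᵥ Q'.mulVec m)
  rw [← quad_expand] at h'
  refine ⟨x • k + y • m, ?_, ?_, h'⟩
  · intro h0
    have z0 := congrFun h0 i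
    have z1 := congrFun h0 (i + 1)
    have z2 := congrFun h0 (i + 2)
    simp only [Pi.add_apply, Pi.smul_apply, smul_eq_mul, m0, m1, m2, Pi.zero_apply, mul_zero,
      add_zero] at z0 z1 z2
    have hx : x = 0 := by simpa using (mul_eq_zero.mp z0).resolve_right hi
    subst hx
    simp only [zero_mul, zero_add, mul_eq_zero] at z1 z2
    tauto
  · rw [quad_expand, hQk, h]
    have : k ⬝ᵥ Q.mulVec m = 0 := by
      rw [Matrix.dotProduct_mulVec, ← Matrix.mulVec_transpose, hQ.eq, hQk, zero_dotProduct]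
    rw [this]; simp

lemma two_conics (Q Q' : Matrix (Fin 3) (Fin 3) ℂ) (hQ : Q.IsSymm) (hQ' : Q'.IsSymm) :
    ∃ v : Fin 3 → ℂ, v ≠ 0 ∧ v ⬝ᵥ Q.mulVec v = 0 ∧ v ⬝ᵥ Q'.mulVec v = 0 := by
  by_cases hd : Q'.det = 0
  · obtain ⟨k, hk, hk'⟩ := Matrix.exists_mulVec_eq_zero_iff.mpr hd
    obtain ⟨v, h1, h2, h3⟩ := deg_conic Q' Q hQ' k hk hk'
    exact ⟨v, h1, h3, h2⟩
  · obtain ⟨μ, hμ⟩ := Module.End.exists_eigenvalue (Matrix.toLin' (Q'⁻¹ * Q))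
    obtain ⟨k, hk⟩ := hμ.exists_hasEigenvector
    have hk1 := hk.apply_eq_smul
    rw [Matrix.toLin'_apply] at hk1
    have hk2 : (Q - μ • Q').mulVec k = 0 := by
      have := congrArg Q'.mulVec hk1
      rw [Matrix.mulVec_mulVec, ← Matrix.mul_assoc,
        Matrix.mul_nonsing_inv _ (isUnit_iff_ne_zero.mpr hd), Matrix.one_mul,
        Matrix.mulVec_smul] at this
      rw [Matrix.sub_mulVec, this, Matrix.smul_mulVec, sub_self]
    obtain ⟨v, h1, h2, h3⟩ := deg_conic (Q - μ • Q') Q' (hQ.sub (hQ'.smul μ)) k hk.2 hk2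
    refine ⟨v, h1, ?_, h3⟩
    rw [Matrix.sub_mulVec, Matrix.smul_mulVec, dotProduct_sub, dotProduct_smul, h3] at h2
    simpa using h2

lemma conics_coeff (a b : Fin 6 → ℂ) : ∃ v : Fin 3 → ℂ, v ≠ 0 ∧
    a 0 * v 0 ^ 2 + a 1 * (v 0 * v 1) + a 2 * (v 0 * v 2) + a 3 * v 1 ^ 2 + a 4 * (v 1 * v 2)
      + a 5 * v 2 ^ 2 = 0 ∧
    b 0 * v 0 ^ 2 + b 1 * (v 0 * v 1) + b 2 * (v 0 * v 2) + b 3 * v 1 ^ 2 + b 4 * (v 1 * v 2)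
      + b 5 * v 2 ^ 2 = 0 := by
  let Q : (Fin 6 → ℂ) → Matrix (Fin 3) (Fin 3) ℂ := fun a =>
    !![a 0, a 1 / 2, a 2 / 2; a 1 / 2, a 3, a 4 / 2; a 2 / 2, a 4 / 2, a 5]
  have hs : ∀ a, (Q a).IsSymm := by
    intro a
    ext i j
    fin_cases i <;> fin_cases j <;> rfl
  obtain ⟨v, h0, h1, h2⟩ := two_conics (Q a) (Q b) (hs a) (hs b)
  refine ⟨v, h0, ?_, ?_⟩
  · rw [← h1]
    simp [Q, Matrix.mulVec, dotProduct, Fin.sum_univ_three]; ring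
  · rw [← h2]
    simp [Q, Matrix.mulVec, dotProduct, Fin.sum_univ_three]; ring

noncomputable def lin (l : Fin 4 → ℝ) : MvPolynomial (Fin 4) ℝ := ∑ i, C (l i) * X i

noncomputable def lc (l : Fin 4 → ℝ) : (Fin 4 → ℂ) →ₗ[ℂ] ℂ :=
  ∑ i, (l i : ℂ) • LinearMap.proj i

lemma aeval_lin (l : Fin 4 → ℝ) (p : Fin 4 → ℂ) : aeval p (lin l) = lc l p := by
  simp [lin, lc, map_sum]

lemma pderiv_lin (l : Fin 4 → ℝ) (i : Fin 4) : pderiv i (lin l) = C (l i) := by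
  fin_cases i <;> simp [lin, Fin.sum_univ_four, pderiv_X]

def Sing (F : MvPolynomial (Fin 4) ℝ) : Prop :=
  ∃ p : Fin 4 → ℂ, p ≠ 0 ∧ aeval p F = 0 ∧ ∀ i, aeval p (pderiv i F) = 0

lemma rank1_point (s : Fin 6 → Fin 4 → ℝ) : ∃ p : Fin 4 → ℂ, p ≠ 0 ∧ ∃ v : Fin 3 → ℂ,
    lc (s 0) p = v 0 ^ 2 ∧ lc (s 1) p = v 0 * v 1 ∧ lc (s 2) p = v 0 * v 2 ∧
    lc (s 3) p = v 1 ^ 2 ∧ lc (s 4) p = v 1 * v 2 ∧ lc (s 5) p = v 2 ^ 2 := by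
  let Φ : (Fin 4 → ℂ) →ₗ[ℂ] (Fin 6 → ℂ) := LinearMap.pi fun j => lc (s j)
  by_cases hinj : LinearMap.ker Φ = ⊥
  · have h4 : Module.finrank ℂ (LinearMap.range Φ) = 4 := by
      rw [LinearMap.finrank_range_of_inj (LinearMap.ker_eq_bot.mp hinj)]; simp
    have h2 : Module.finrank ℂ ((Fin 6 → ℂ) ⧸ LinearMap.range Φ) = Module.finrank ℂ (Fin 2 → ℂ) := by
      have := Submodule.finrank_quotient_add_finrank (LinearMap.range Φ)
      rw [h4] at this
      simp at this ⊢
      omega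
    let e := LinearEquiv.ofFinrankEq _ _ h2
    let g : (Fin 6 → ℂ) →ₗ[ℂ] (Fin 2 → ℂ) := e.toLinearMap.comp (LinearMap.range Φ).mkQ
    have hg : ∀ y, g y = 0 → y ∈ LinearMap.range Φ := by
      intro y hy
      simpa [g] using hy
    obtain ⟨v, hv, ha, hb⟩ := conics_coeff (fun j => g (Pi.single j 1) 0)
      (fun j => g (Pi.single j 1) 1)
    let y : Fin 6 → ℂ := ![v 0 ^ 2, v 0 * v 1, v 0 * v 2, v 1 ^ 2, v 1 * v 2, v 2 ^ 2]
    have hy : g y = 0 := by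
      have : g y = ∑ j, y j • g (Pi.single j 1) := by
        conv_lhs => rw [← Finset.univ_sum_single y]
        rw [map_sum]
        refine Finset.sum_congr rfl fun j _ => ?_
        rw [← map_smul, ← Pi.single_smul, smul_eq_mul, mul_one]
      rw [this]
      ext i
      fin_cases i
      · simp [Fin.sum_univ_six, y]; linear_combination ha
      · simp [Fin.sum_univ_six, y]; linear_combination hb
    obtain ⟨p, hp⟩ := hg y hy
    refine ⟨p, ?_, v, congrFun hp 0, congrFun hp 1, congrFun hp 2, congrFun hp 3, congrFun hp 4,
      congrFun hp 5⟩
    rintro rfl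
    rw [map_zero] at hp
    apply hv
    ext i
    have q0 := congrFun hp 0
    have q1 := congrFun hp 3
    have q2 := congrFun hp 5
    simp only [y] at q0 q1 q2
    fin_cases i
    · exact pow_eq_zero_iff (two_ne_zero) |>.mp q0.symm
    · exact pow_eq_zero_iff (two_ne_zero) |>.mp q1.symm
    · exact pow_eq_zero_iff (two_ne_zero) |>.mp q2.symm
  · obtain ⟨p, hp, hp0⟩ := (Submodule.ne_bot_iff _).mp hinj
    rw [LinearMap.mem_ker] at hp
    refine ⟨p, hp0, 0, ?_⟩
    have := congrFun hp
    simp only [Φ, LinearMap.pi_apply] at this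
    simp [this]

lemma caseI (F : MvPolynomial (Fin 4) ℝ) (κ : ℝ) (a b c d e f : Fin 4 → ℝ)
    (hF : F = C κ * (lin a * (lin d * lin f - lin e * lin e) - lin b * (lin b * lin f - lin e * lin c)
      + lin c * (lin b * lin e - lin d * lin c))) : Sing F := by
  obtain ⟨p, hp, v, h0, h1, h2, h3, h4, h5⟩ := rank1_point ![a, b, c, d, e, f]
  simp at h0 h1 h2 h3 h4 h5
  refine ⟨p, hp, ?_, fun i => ?_⟩
  · rw [hF]
    simp only [map_add, map_sub, map_mul, aeval_lin, h0, h1, h2, h3, h4, h5]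
    ring
  · rw [hF]
    simp only [Derivation.leibniz, map_add, map_sub, map_mul, aeval_lin, pderiv_lin, pderiv_C,
      smul_eq_mul, map_zero, h0, h1, h2, h3, h4, h5]
    ring

lemma quad_point (g h : (Fin 4 → ℂ) →ₗ[ℂ] ℂ) (q : (Fin 4 → ℂ) → ℂ)
    (hq : ∀ u v s t, q (s • u + t • v) = s ^ 2 * q u + s * t * (q (u + v) - q u - q v)
      + t ^ 2 * q v) : ∃ p, p ≠ 0 ∧ g p = 0 ∧ h p = 0 ∧ q p = 0 := by
  let K := LinearMap.ker (g.prod h)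
  have hK : 2 ≤ Module.finrank ℂ K := by
    have h1 := LinearMap.finrank_range_add_finrank_ker (g.prod h)
    have h2 := Submodule.finrank_le (LinearMap.range (g.prod h))
    simp at h1 h2
    simp only [K]
    omega
  obtain ⟨f, hf⟩ := exists_linearIndependent_of_le_finrank hK
  have hff : f = ![f 0, f 1] := by
    ext i : 1; fin_cases i <;> rfl
  rw [hff] at hf
  have hf' := LinearIndependent.pair_iff.mp hf
  obtain ⟨s, t, hst, hz⟩ := bin_quad (q (f 0)) (q ((f 0 : Fin 4 → ℂ) + f 1) - q (f 0) - q (f 1)) (q (f 1))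
  rw [← hq] at hz
  have hk := (s • f 0 + t • f 1).2
  rw [LinearMap.mem_ker] at hk
  have hk : g (s • f 0 + t • f 1 : K) = 0 ∧ h (s • f 0 + t • f 1 : K) = 0 :=
    ⟨congrArg Prod.fst hk, congrArg Prod.snd hk⟩
  refine ⟨(s • f 0 + t • f 1 : K), ?_, hk.1, hk.2, ?_⟩
  · intro h0
    have := hf' s t (Subtype.ext h0)
    tauto
  · simpa using hz

lemma caseII (F : MvPolynomial (Fin 4) ℝ) (κ : ℝ) (l a b c d e : Fin 4 → ℝ)
    (hF : F = C κ * (lin c * (lin l * lin e - lin a * lin a - lin b * lin b)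
      - lin l * (lin d * lin d))) : Sing F := by
  obtain ⟨p, hp, h1, h2, h3⟩ := quad_point (lc c) (lc d)
    (fun p => lc l p * lc e p - lc a p * lc a p - lc b p * lc b p) (by
      intro u v s t
      simp only [map_add, map_smul, smul_eq_mul]
      ring)
  refine ⟨p, hp, ?_, fun i => ?_⟩
  · rw [hF]
    simp only [map_add, map_sub, map_mul, aeval_lin, h1, h2, h3]
    ring
  · rw [hF]
    simp only [Derivation.leibniz, map_add, map_sub, map_mul, aeval_lin, pderiv_lin, pderiv_C,
      smul_eq_mul, map_zero, h1, h2, h3]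
    ring

lemma caseIII (F Q : MvPolynomial (Fin 4) ℝ) (κ : ℝ) (l : Fin 4 → ℝ)
    (hF : F = C κ * (lin l * Q))
    (hQ : ∀ (u v : Fin 4 → ℂ) (s t : ℂ), aeval (s • u + t • v) Q =
      s ^ 2 * aeval u Q + s * t * (aeval (u + v) Q - aeval u Q - aeval v Q)
      + t ^ 2 * aeval v Q) : Sing F := by
  obtain ⟨p, hp, h1, -, h3⟩ := quad_point (lc l) 0 (fun p => aeval p Q) hQ
  refine ⟨p, hp, ?_, fun i => ?_⟩
  · rw [hF]
    simp only [map_mul, aeval_lin, h1]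
    ring
  · rw [hF]
    simp only [Derivation.leibniz, map_add, map_mul, aeval_lin, pderiv_lin, pderiv_C,
      smul_eq_mul, map_zero, h1, h3]
    ring

noncomputable def pencil (A : Fin 4 → M4) : Matrix (Fin 4) (Fin 4) (MvPolynomial (Fin 4) ℝ) :=
  ∑ i : Fin 4, (X i : MvPolynomial (Fin 4) ℝ) • (A i).map C

lemma pencil_apply (A : Fin 4 → M4) (i j : Fin 4) : pencil A i j = lin fun k => A k i j := by
  simp [pencil, lin, Matrix.sum_apply, mul_comm]

lemma lin_add (a b : Fin 4 → ℝ) : lin (a + b) = lin a + lin b := by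
  simp [lin, add_mul, Finset.sum_add_distrib]

lemma lin_zero : lin 0 = 0 := by simp [lin]

lemma pencil_symm {A : Fin 4 → M4} (h : ∀ k, (A k).IsSymm) : (pencil A).IsSymm := by
  refine Matrix.IsSymm.ext fun i j => ?_
  rw [pencil_apply, pencil_apply]
  congr 1; funext k; exact (h k).apply _ _

lemma det_pencil_conj (A : Fin 4 → M4) (Q : M4) :
    (pencil fun k => Q.transpose * A k * Q).det = C (Q.det) ^ 2 * (pencil A).det := by
  have : (pencil fun k => Q.transpose * A k * Q) = (Q.map C).transpose * pencil A * Q.map C := by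
    simp only [pencil, Finset.mul_sum, Finset.sum_mul, Matrix.mul_smul, Matrix.smul_mul]
    refine Finset.sum_congr rfl fun k _ => ?_
    rw [Matrix.map_mul, Matrix.map_mul, Matrix.transpose_map]
  have hd : (Q.map (C : ℝ →+* MvPolynomial (Fin 4) ℝ)).det = C Q.det := by
    rw [RingHom.map_det]; rfl
  rw [this, Matrix.det_mul, Matrix.det_mul, Matrix.det_transpose, hd]
  ring

lemma eval_pencil (A : Fin 4 → M4) (p : Fin 4 → ℝ) :
    (eval p).mapMatrix (pencil A) = ∑ k, p k • A k := by
  ext i j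
  simp [pencil_apply, lin, Matrix.sum_apply, mul_comm]

lemma eval_lin (l p : Fin 4 → ℝ) : eval p (lin l) = ∑ k, l k * p k := by
  simp [lin]

lemma core1 (F : MvPolynomial (Fin 4) ℝ) (κ : ℝ) (m : Fin 4 → ℝ) (hm : lin m ≠ 0) (B : Fin 4 → M4)
    (hB : ∀ k, (B k).IsSymm) (h : lin m * F = C κ * (pencil B).det)
    (h0 : ∀ k, B k 0 0 = m k) (h1 : ∀ k, B k 0 1 = 0) (h2 : ∀ k, B k 0 2 = 0)
    (h3 : ∀ k, B k 0 3 = 0) : Sing F := by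
  rw [det_symm (pencil_symm hB), D4_eq] at h
  simp only [pencil_apply, h0, h1, h2, h3] at h
  have z : lin (fun _ => 0) = 0 := lin_zero
  rw [z] at h
  refine caseI F κ (fun k => B k 1 1) (fun k => B k 1 2) (fun k => B k 1 3) (fun k => B k 2 2)
    (fun k => B k 2 3) (fun k => B k 3 3) ?_
  apply mul_left_cancel₀ hm
  rw [h]; ring

lemma core2 (F : MvPolynomial (Fin 4) ℝ) (κ : ℝ) (m : Fin 4 → ℝ) (hm : lin m ≠ 0) (B : Fin 4 → M4)
    (hB : ∀ k, (B k).IsSymm) (h : lin m * F = C κ * (pencil B).det)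
    (h0 : ∀ k, B k 0 0 = m k) (h1 : ∀ k, B k 0 1 = 0) (h2 : ∀ k, B k 0 2 = 0)
    (h3 : ∀ k, B k 1 1 = m k) (h4 : ∀ k, B k 1 2 = 0) : Sing F := by
  rw [det_symm (pencil_symm hB), D4_eq] at h
  simp only [pencil_apply, h0, h1, h2, h3, h4] at h
  have z : lin (fun _ => 0) = 0 := lin_zero
  rw [z] at h
  refine caseII F κ m (fun k => B k 0 3) (fun k => B k 1 3) (fun k => B k 2 2) (fun k => B k 2 3)
    (fun k => B k 3 3) ?_
  apply mul_left_cancel₀ hm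
  rw [h]; ring

lemma e3_symm {R : Type*} [CommRing R] {N : Matrix (Fin 4) (Fin 4) R} (h : N.IsSymm) :
    e3 N = N 1 1 * (N 2 2 * N 3 3 - N 2 3 * N 2 3) - N 1 2 * (N 1 2 * N 3 3 - N 2 3 * N 1 3)
        + N 1 3 * (N 1 2 * N 2 3 - N 2 2 * N 1 3)
      + (N 0 0 * (N 2 2 * N 3 3 - N 2 3 * N 2 3) - N 0 2 * (N 0 2 * N 3 3 - N 2 3 * N 0 3)
        + N 0 3 * (N 0 2 * N 2 3 - N 2 2 * N 0 3))
      + (N 0 0 * (N 1 1 * N 3 3 - N 1 3 * N 1 3) - N 0 1 * (N 0 1 * N 3 3 - N 1 3 * N 0 3)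
        + N 0 3 * (N 0 1 * N 1 3 - N 1 1 * N 0 3))
      + (N 0 0 * (N 1 1 * N 2 2 - N 1 2 * N 1 2) - N 0 1 * (N 0 1 * N 2 2 - N 1 2 * N 0 2)
        + N 0 2 * (N 0 1 * N 1 2 - N 1 1 * N 0 2)) := by
  have s10 : N 1 0 = N 0 1 := h.apply _ _
  have s20 : N 2 0 = N 0 2 := h.apply _ _
  have s30 : N 3 0 = N 0 3 := h.apply _ _
  have s21 : N 2 1 = N 1 2 := h.apply _ _
  have s31 : N 3 1 = N 1 3 := h.apply _ _
  have s32 : N 3 2 = N 2 3 := h.apply _ _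
  have a1 : (1 : Fin 4).succAbove 0 = 0 := by decide
  have a2 : (1 : Fin 4).succAbove 1 = 2 := by decide
  have a3 : (1 : Fin 4).succAbove 2 = 3 := by decide
  have b1 : (2 : Fin 4).succAbove 0 = 0 := by decide
  have b2 : (2 : Fin 4).succAbove 1 = 1 := by decide
  have b3 : (2 : Fin 4).succAbove 2 = 3 := by decide
  have c1 : (3 : Fin 4).succAbove 0 = 0 := by decide
  have c2 : (3 : Fin 4).succAbove 1 = 1 := by decide
  have c3 : (3 : Fin 4).succAbove 2 = 2 := by decide
  have d1 : (0 : Fin 4).succAbove 0 = 1 := by decide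
  have d2 : (0 : Fin 4).succAbove 1 = 2 := by decide
  have d3 : (0 : Fin 4).succAbove 2 = 3 := by decide
  simp only [e3, Matrix.trace, Matrix.diag, Fin.sum_univ_four,
    Matrix.adjugate_fin_succ_eq_det_submatrix, Matrix.det_fin_three, Matrix.submatrix_apply,
    a1, a2, a3, b1, b2, b3, c1, c2, c3, d1, d2, d3, s10, s20, s30, s21, s31, s32]
  norm_num
  ring

lemma core3 (F : MvPolynomial (Fin 4) ℝ) (κ : ℝ) (m : Fin 4 → ℝ) (hm : lin m ≠ 0)
    (B N : Fin 4 → M4) (hN : ∀ k, (N k).IsSymm) (hBN : ∀ k, B k = N k + m k • (1 : M4))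
    (h : lin m * F = C κ * (pencil B).det) (he : ∀ p : Fin 4 → ℝ, e3 (∑ k, p k • N k) = 0)
    (hdet : ∀ p : Fin 4 → ℝ, (∑ k, p k • N k).det = 0) :
    Sing F := by
  have hB : ∀ k, (B k).IsSymm := by
    intro k
    rw [hBN]
    exact (hN k).add (Matrix.isSymm_one.smul _)
  have hE : e3 (pencil N) = 0 := by
    apply MvPolynomial.funext
    intro p
    rw [map_zero, ← he p, ← eval_pencil, e3, e3, ← RingHom.map_adjugate]
    simp [Matrix.trace]
  have hsN := pencil_symm hN
  rw [e3_symm hsN] at hE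
  have hD : (pencil N).det = 0 := by
    apply MvPolynomial.funext
    intro p
    rw [map_zero, ← hdet p, ← eval_pencil, RingHom.map_det]
  rw [det_symm hsN, D4_eq] at hD
  have hoff : ∀ i j, i ≠ j → pencil B i j = pencil N i j := by
    intro i j hij
    rw [pencil_apply, pencil_apply]
    congr 1; funext k
    simp [hBN, Matrix.one_apply_ne hij]
  have hdg : ∀ i, pencil B i i = pencil N i i + lin m := by
    intro i
    rw [pencil_apply, pencil_apply, ← lin_add]
    congr 1; funext k
    simp [hBN]
  rw [det_symm (pencil_symm hB), D4_eq, hdg, hdg, hdg, hdg, hoff 0 1 (by decide),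
    hoff 0 2 (by decide), hoff 0 3 (by decide), hoff 1 2 (by decide), hoff 1 3 (by decide),
    hoff 2 3 (by decide)] at h
  refine caseIII F (lin m * lin m + lin m * (pencil N 0 0 + pencil N 1 1 + pencil N 2 2 + pencil N 3 3)
    + (pencil N 0 0 * pencil N 1 1 - pencil N 0 1 * pencil N 0 1)
    + (pencil N 0 0 * pencil N 2 2 - pencil N 0 2 * pencil N 0 2)
    + (pencil N 0 0 * pencil N 3 3 - pencil N 0 3 * pencil N 0 3)
    + (pencil N 1 1 * pencil N 2 2 - pencil N 1 2 * pencil N 1 2)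
    + (pencil N 1 1 * pencil N 3 3 - pencil N 1 3 * pencil N 1 3)
    + (pencil N 2 2 * pencil N 3 3 - pencil N 2 3 * pencil N 2 3)) κ m ?_ ?_
  · apply mul_left_cancel₀ hm
    rw [h]
    generalize pencil N 0 0 = n00 at *
    generalize pencil N 0 1 = n01 at *
    generalize pencil N 0 2 = n02 at *
    generalize pencil N 0 3 = n03 at *
    generalize pencil N 1 1 = n11 at *
    generalize pencil N 1 2 = n12 at *
    generalize pencil N 1 3 = n13 at *
    generalize pencil N 2 2 = n22 at *
    generalize pencil N 2 3 = n23 at *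
    generalize pencil N 3 3 = n33 at *
    linear_combination C κ * (lin m * hE + hD)
  · intro u v s t
    simp only [pencil_apply, map_add, map_sub, map_mul, aeval_lin, map_smul, smul_eq_mul]
    ring

theorem stmt_19 (f : MvPolynomial (Fin 3) ℝ) (hdeg : f.totalDegree = 3)
    (F : MvPolynomial (Fin 4) ℝ) (hFhom : F.IsHomogeneous 3)
    (hFdehom : ∀ x y z : ℝ, eval ![(1 : ℝ), x, y, z] F = eval ![x, y, z] f)
    (hsmooth : ¬ ∃ p : Fin 4 → ℂ, p ≠ 0 ∧ aeval p F = 0 ∧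
      ∀ i, aeval p (pderiv i F) = 0) :
    ¬ ∃ (l : Fin 4 → ℝ) (A : Fin 4 → Matrix (Fin 4) (Fin 4) ℝ),
      (∀ k, (A k).IsSymm) ∧ (A 0).PosDef ∧
      (∑ i, C (l i) * X i) * F =
        (∑ i : Fin 4, (X i : MvPolynomial (Fin 4) ℝ) • (A i).map C).det := by
  rintro ⟨l, A, hsym, hpd, heq⟩
  apply hsmooth
  change Sing F
  change lin l * F = (pencil A).det at heq
  obtain ⟨P, hP, hP1⟩ := posDef_congr (A 0) hpd
  obtain ⟨B, hBdef⟩ : ∃ B : Fin 4 → M4, B = fun k => P.transpose * A k * P := ⟨_, rfl⟩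
  have hconj : ∀ (Q : M4) (A : Fin 4 → M4), (∀ k, (A k).IsSymm) →
      ∀ k, (Q.transpose * A k * Q).IsSymm := by
    intro Q A hA k
    rw [Matrix.IsSymm, Matrix.transpose_mul, Matrix.transpose_mul, (hA k).eq,
      Matrix.transpose_transpose, Matrix.mul_assoc]
  have hB : ∀ k, (B k).IsSymm := by rw [hBdef]; exact hconj P A hsym
  have hB0 : B 0 = 1 := by rw [hBdef]; exact hP1
  have hdetB : (pencil B).det = C P.det ^ 2 * (lin l * F) := by
    rw [hBdef, det_pencil_conj, heq]
  have hev : ∀ p : Fin 4 → ℝ, (∑ k, p k • B k).det = P.det ^ 2 * ((∑ k, l k * p k) * eval p F) := by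
    intro p
    have := congrArg (eval p) hdetB
    rw [RingHom.map_det, eval_pencil] at this
    rw [this]
    simp [eval_lin]
  have hl0 : l 0 ≠ 0 := by
    intro h0
    have := hev (Pi.single 0 1)
    simp [Fin.sum_univ_four, h0, hB0] at this
  obtain ⟨m, hm⟩ : ∃ m : Fin 4 → ℝ, m = fun k => l k / l 0 := ⟨_, rfl⟩
  have hm0 : m 0 = 1 := by rw [hm]; simp [hl0]
  have hlm : lin l = C (l 0) * lin m := by
    simp only [lin, Finset.mul_sum, ← mul_assoc, ← C_mul]
    refine Finset.sum_congr rfl fun k _ => ?_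
    rw [hm]; congr 2; field_simp
  have hlin : lin m ≠ 0 := by
    intro h
    have := congrArg (eval (Pi.single 0 1)) h
    rw [eval_lin] at this
    simp [Fin.sum_univ_four, hm0] at this
  obtain ⟨κ, hκ⟩ : ∃ κ : ℝ, κ = (P.det ^ 2 * l 0)⁻¹ := ⟨_, rfl⟩
  have hmF : lin m * F = C κ * (pencil B).det := by
    have h1 : κ * P.det ^ 2 * l 0 = 1 := by rw [hκ]; field_simp
    have h2 : (C κ * C P.det ^ 2 * C (l 0) : MvPolynomial (Fin 4) ℝ) = 1 := by
      rw [← C_pow, ← C_mul, ← C_mul, h1, C_1]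
    rw [hdetB, hlm]
    linear_combination -(lin m * F) * h2
  obtain ⟨N, hNdef⟩ : ∃ N : Fin 4 → M4, N = fun k => B k - m k • (1 : M4) := ⟨_, rfl⟩
  have hBN : ∀ k, B k = N k + m k • (1 : M4) := by intro k; rw [hNdef]; simp
  have hN : ∀ k, (N k).IsSymm := by
    intro k; rw [hNdef]; exact (hB k).sub (Matrix.isSymm_one.smul _)
  have hN0 : N 0 = 0 := by rw [hNdef]; simp [hB0, hm0]
  have hdetN : ∀ p : Fin 4 → ℝ, (∑ k, p k • N k).det = 0 := by
    intro p
    obtain ⟨q, hq⟩ : ∃ q : Fin 4 → ℝ, q = ![-(m 1 * p 1 + m 2 * p 2 + m 3 * p 3), p 1, p 2, p 3] :=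
      ⟨_, rfl⟩
    have hs : ∑ k, m k * q k = 0 := by
      rw [hq]; simp [Fin.sum_univ_four, hm0]; ring
    have hsl : ∑ k, l k * q k = 0 := by
      have : ∑ k, l k * q k = l 0 * ∑ k, m k * q k := by
        rw [Finset.mul_sum]
        refine Finset.sum_congr rfl fun k _ => ?_
        rw [hm]; field_simp
      rw [this, hs, mul_zero]
    have h1 : ∑ k, p k • N k = ∑ k, q k • N k := by
      simp [Fin.sum_univ_four, hN0, hq]
    have h2 : ∑ k, q k • B k = ∑ k, q k • N k := by
      simp only [hBN, smul_add, Finset.sum_add_distrib, smul_smul, ← Finset.sum_smul]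
      have : ∑ k, q k * m k = 0 := by rw [← hs]; simp [mul_comm]
      rw [this]; simp
    rw [h1, ← h2, hev, hsl]; ring
  let T : (Fin 4 → ℝ) →ₗ[ℝ] M4 := Fintype.linearCombination ℝ N
  have hT : ∀ p, T p = ∑ k, p k • N k := fun p => Fintype.linearCombination_apply ℝ N p
  have hmem : ∀ k, N k ∈ LinearMap.range T := by
    intro k
    refine ⟨Pi.single k 1, ?_⟩
    rw [hT]
    simp [Pi.single_apply]
  have hSS : SymSing (LinearMap.range T) := by
    rintro _ ⟨p, rfl⟩
    rw [hT]
    refine ⟨?_, hdetN p⟩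
    rw [Matrix.IsSymm, Matrix.transpose_sum]
    refine Finset.sum_congr rfl fun k _ => ?_
    rw [Matrix.transpose_smul, (hN k).eq]
  have hO : ∀ O : M4, O.transpose * O = 1 → lin m * F =
      C κ * (pencil fun k => O.transpose * B k * O).det := by
    intro O hO
    have h1 : O.det ^ 2 = 1 := by
      have := congrArg Matrix.det hO
      rw [Matrix.det_mul, Matrix.det_transpose, Matrix.det_one] at this
      rw [← this]; ring
    rw [det_pencil_conj, hmF, ← C_pow, h1, C_1, one_mul]
  have hOB : ∀ O : M4, O.transpose * O = 1 → ∀ k, O.transpose * B k * O =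
      O.transpose * N k * O + m k • (1 : M4) := by
    intro O hO k
    rw [hBN, Matrix.mul_add, Matrix.add_mul, Matrix.mul_smul, Matrix.smul_mul, Matrix.mul_one, hO]
  rcases good_main _ hSS with h | ⟨O, hO1, h⟩ | ⟨O, hO1, h⟩
  · exact core3 F κ m hlin B N hN hBN hmF (fun p => by rw [← hT]; exact h _ ⟨p, rfl⟩) hdetN
  · have e := hOB O hO1
    refine core1 F κ m hlin _ (hconj O B hB) (hO O hO1) ?_ ?_ ?_ ?_ <;> intro k <;>
      rw [e, Matrix.add_apply, h _ (hmem k)] <;> simp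
  · have e := hOB O hO1
    refine core2 F κ m hlin _ (hconj O B hB) (hO O hO1) ?_ ?_ ?_ ?_ ?_ <;> intro k <;>
      obtain ⟨h1, h2, h3, h4, h5⟩ := h _ (hmem k) <;>
      rw [e, Matrix.add_apply]
    · rw [h1]; simp
    · rw [h2]; simp
    · rw [h3]; simp
    · rw [h4]; simp
    · rw [h5]; simp
end
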